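/- arXiv:2108.06642 — 4 statements merged into one kernel-verified Lean document; each statement's English description precedes it below -/
import Mathlib

section
/- Let X and W be subcategories of A such that X is closed under extensions and W is a cogenerator for X. Then for every object C of A and every integer n ≥ 1, the following are equivalent: (1) C ∈ X̂_n; (2) there exists a short exact sequence 0 → Y_C → X_C → C → 0 in A with X_C ∈ X and Y_C ∈ Ŵ_{n−1}. -/
/-!
Write `Cone(Y, X)` for the cokernels of monomorphisms from objects of `Y` to objects of `X`, and
`CoCone(Y, X)` for the kernels of epimorphisms from objects of `Y` to objects of `X`, so that
`X̂ₙ₊₁ = Cone(X̂ₙ, X)`, and `W` being a cogenerator says that `W ⊆ X ⊆ CoCone(W, X)`. Pushouts give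
`Cone(Y, CoCone(W, X)) ⊆ CoCone(Cone(Y, W), X)` and, when `X` is closed under extensions,
`Cone(CoCone(Y, X), X) ⊆ Cone(Y, X)`. The key point is that `X̂ₙ ⊆ CoCone(Ŵₙ, X)`, by induction:
`X̂ₙ₊₁ ⊆ Cone(CoCone(Ŵₙ, X), X) ⊆ Cone(Ŵₙ, X) ⊆ Cone(Ŵₙ, CoCone(W, X)) ⊆ CoCone(Ŵₙ₊₁, X)`. The
first two inclusions of this chain already give `X̂ₙ₊₁ ⊆ Cone(Ŵₙ, X)`; the reverse inclusion holds
because `W ⊆ X`.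
-/

open CategoryTheory CategoryTheory.Limits CategoryTheory.Abelian ZeroObject

universe w v u

namespace FrobeniusPaper

variable {C : Type u} [Category.{v} C] [Abelian C]

/-- `f, g` form a short exact sequence `0 → A → B → D → 0` in the abelian category `C`. -/
def IsSES {A B D : C} (f : A ⟶ B) (g : B ⟶ D) : Prop :=
  ∃ w : f ≫ g = 0, (ShortComplex.mk f g w).ShortExact

/-- A "subcategory" in the sense of the paper: a full additive subcategory, regarded as the
predicate of membership for its objects, closed under isomorphisms and direct summands. -/
structure IsSubcat (X : C → Prop) : Prop where
  zero : X 0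
  iso_closed : ∀ {A B : C}, (A ≅ B) → X A → X B
  biprod_closed : ∀ {A B : C}, X A → X B → X (A ⊞ B)
  summand_closed : ∀ {A M : C} (i : A ⟶ M) (p : M ⟶ A), i ≫ p = 𝟙 A → X M → X A

/-- `Hat X n M` means `M ∈ X̂ₙ`, i.e. there is an exact sequence
`0 → Xₙ → ⋯ → X₁ → X₀ → M → 0` with all `Xᵢ ∈ X`. -/
def Hat (X : C → Prop) : ℕ → C → Prop
  | 0, M => X M
  | (n + 1), M => ∃ (K E : C) (f : K ⟶ E) (g : E ⟶ M), IsSES f g ∧ X E ∧ Hat X n K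

/-- `M ∈ X̂ = ⋃ₙ X̂ₙ`. -/
def HatAll (X : C → Prop) (M : C) : Prop := ∃ n, Hat X n M

/-- `W` is a cogenerator for `X`. -/
def IsCogenerator (W X : C → Prop) : Prop :=
  (∀ M, W M → X M) ∧
    ∀ M, X M → ∃ (W₀ X' : C) (f : M ⟶ W₀) (g : W₀ ⟶ X'), IsSES f g ∧ W W₀ ∧ X X'

/-- `W` is a generator for `X`. -/
def IsGenerator (W X : C → Prop) : Prop :=
  (∀ M, W M → X M) ∧
    ∀ M, X M → ∃ (X' W₀ : C) (f : X' ⟶ W₀) (g : W₀ ⟶ M), IsSES f g ∧ W W₀ ∧ X X'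

/-- `X` is closed under extensions. -/
def ExtClosed (X : C → Prop) : Prop :=
  ∀ ⦃A B D : C⦄ (f : A ⟶ B) (g : B ⟶ D), IsSES f g → X A → X D → X B

/-- `X` is closed under kernels of epimorphisms. -/
def KerEpiClosed (X : C → Prop) : Prop :=
  ∀ ⦃A B D : C⦄ (f : A ⟶ B) (g : B ⟶ D), IsSES f g → X B → X D → X A

/-- A thick subcategory: closed under direct summands and two-out-of-three for
short exact sequences. -/
def IsThickSub (T : C → Prop) : Prop :=
  IsSubcat T ∧ ∀ ⦃A B D : C⦄ (f : A ⟶ B) (g : B ⟶ D), IsSES f g →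
    (T A → T B → T D) ∧ (T A → T D → T B) ∧ (T B → T D → T A)

/-- Membership in `Thick(X)`, the smallest thick subcategory containing `X`. -/
def thickClosure (X : C → Prop) (M : C) : Prop :=
  ∀ T : C → Prop, IsThickSub T → (∀ N, X N → T N) → T M

variable [HasExt.{w} C]

/-- `Y ∈ X^⊥`, i.e. `Extⁱ(M, Y) = 0` for all `i ≥ 1` and `M ∈ X`. -/
def rightPerp (X : C → Prop) (Y : C) : Prop :=
  ∀ M, X M → ∀ i : ℕ, 1 ≤ i → Subsingleton (Abelian.Ext M Y i)

/-- A left Frobenius pair `(X, W)`. -/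
structure LeftFrobenius (X W : C → Prop) : Prop where
  subX : IsSubcat X
  subW : IsSubcat W
  extClosed : ExtClosed X
  kerEpiClosed : KerEpiClosed X
  cogen : IsCogenerator W X
  perp : ∀ M, W M → rightPerp X M

/-- A strong left Frobenius pair `(X, W)`. -/
structure StrongLeftFrobenius (X W : C → Prop) extends LeftFrobenius X W : Prop where
  gen : IsGenerator W X
  proj : ∀ M N, W M → X N → ∀ i : ℕ, 1 ≤ i → Subsingleton (Abelian.Ext M N i)

/-- A cotorsion pair `(U, V)` on an extension-closed subcategory `B` of `C`. -/
structure CotorsionPairOn (B U V : C → Prop) : Prop where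
  subU : ∀ M, U M → B M
  subV : ∀ M, V M → B M
  isoU : ∀ {A B' : C}, (A ≅ B') → U A → U B'
  summandU : ∀ {A M : C} (i : A ⟶ M) (p : M ⟶ A), i ≫ p = 𝟙 A → U M → U A
  isoV : ∀ {A B' : C}, (A ≅ B') → V A → V B'
  summandV : ∀ {A M : C} (i : A ⟶ M) (p : M ⟶ A), i ≫ p = 𝟙 A → V M → V A
  ext1 : ∀ M N, U M → V N → Subsingleton (Abelian.Ext M N 1)
  res : ∀ M, B M → ∃ (V₀ U₀ : C) (f : V₀ ⟶ U₀) (g : U₀ ⟶ M), IsSES f g ∧ U U₀ ∧ V V₀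
  cores : ∀ M, B M → ∃ (V₀ U₀ : C) (f : M ⟶ V₀) (g : V₀ ⟶ U₀), IsSES f g ∧ U U₀ ∧ V V₀

section ShortExactSequences

variable {𝓐 : Type u} [Category.{v} 𝓐] [Abelian 𝓐]

-- With the cokernel condition written as a pushout square, the operations on short exact sequences
-- below are instances of the pasting law.
lemma isSES_iff_mono_and_isPushout {A B D : 𝓐} {f : A ⟶ B} {g : B ⟶ D} :
    IsSES f g ↔ Mono f ∧ IsPushout f (0 : A ⟶ 0) g (0 : 0 ⟶ D) := by
  constructor
  · rintro ⟨w, hS⟩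
    have hg : Epi g := hS.epi_g
    refine ⟨hS.mono_f, ⟨by simp [w]⟩, ⟨PushoutCocone.IsColimit.mk _
      (fun s => hS.exact.desc s.inl (by simp [s.condition]))
      (fun s => hS.exact.g_desc _ _) (fun s => (isZero_zero 𝓐).eq_of_src _ _) ?_⟩⟩
    intro s m hm _
    rw [← cancel_epi g, hm]
    exact (hS.exact.g_desc _ _).symm
  · rintro ⟨hf, sq⟩
    have w : f ≫ g = 0 := by simp [sq.w]
    have hg : Epi g := sq.epi_inl_of_epi
    refine ⟨w, .mk' (ShortComplex.exact_of_g_is_cokernel _ ?_) hf hg⟩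
    exact CokernelCofork.IsColimit.ofπ' g w fun k hk =>
      ⟨sq.desc k 0 (by simp [hk]), sq.inl_desc _ _ _⟩

lemma IsSES.exists_isSES_of_isPushout {A B D A' P : 𝓐} {f : A ⟶ B} {g : B ⟶ D} {a : A ⟶ A'}
    {b : B ⟶ P} {f' : A' ⟶ P} (h : IsSES f g) (sq : IsPushout f a b f') :
    ∃ g' : P ⟶ D, IsSES f' g' := by
  obtain ⟨hf, hfg⟩ := isSES_iff_mono_and_isPushout.1 h
  have hw : f ≫ g = a ≫ (0 : A' ⟶ D) := by simp [hfg.w]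
  have hf' : Mono f' := (MorphismProperty.monomorphisms 𝓐).of_isPushout sq.flip hf
  have hfg' : IsPushout f (a ≫ (0 : A' ⟶ 0)) (b ≫ sq.desc g 0 hw) (0 : 0 ⟶ D) := by
    simpa using hfg
  exact ⟨sq.desc g 0 hw,
    isSES_iff_mono_and_isPushout.2 ⟨hf', hfg'.of_top (by simp) sq⟩⟩

lemma IsSES.comp_of_isPushout {Y A K B Q : 𝓐} {y : Y ⟶ A} {p : A ⟶ K} {i : A ⟶ B} {j : K ⟶ Q}
    {p' : B ⟶ Q} [Mono i] (h : IsSES y p) (sq : IsPushout i p p' j) :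
    IsSES (y ≫ i) p' := by
  obtain ⟨_, hyp⟩ := isSES_iff_mono_and_isPushout.1 h
  refine isSES_iff_mono_and_isPushout.2 ⟨inferInstance, ?_⟩
  simpa using hyp.paste_horiz sq

end ShortExactSequences

section ConesAndCocones

variable {𝓐 : Type u} [Category.{v} 𝓐] [Abelian 𝓐] {W X Y : 𝓐 → Prop}

/-- `InCone Y X M` means `M ∈ Cone(Y, X)`: there is a short exact sequence `0 → K → E → M → 0` with
`K ∈ Y` and `E ∈ X`. By definition, `Hat X (n + 1)` is `InCone (Hat X n) X`. -/
def InCone (Y X : 𝓐 → Prop) (M : 𝓐) : Prop :=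
  ∃ (K E : 𝓐) (f : K ⟶ E) (g : E ⟶ M), IsSES f g ∧ X E ∧ Y K

/-- `InCocone Y X M` means `M ∈ CoCone(Y, X)`: there is a short exact sequence
`0 → M → Q → E → 0` with `Q ∈ Y` and `E ∈ X`. A cogenerator `W` for `X` is a subclass of `X` with
`X ≤ InCocone W X`. -/
def InCocone (Y X : 𝓐 → Prop) (M : 𝓐) : Prop :=
  ∃ (Q E : 𝓐) (f : M ⟶ Q) (g : Q ⟶ E), IsSES f g ∧ Y Q ∧ X E

lemma InCone.mono {Y' X' : 𝓐 → Prop} (hY : Y ≤ Y') (hX : X ≤ X') : InCone Y X ≤ InCone Y' X' :=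
  fun _ ⟨K, E, f, g, hfg, hE, hK⟩ => ⟨K, E, f, g, hfg, hX E hE, hY K hK⟩

lemma inCone_inCocone_le_inCone (hX : ExtClosed X) : InCone (InCocone Y X) X ≤ InCone Y X := by
  rintro M ⟨K, E, f, g, hfg, hE, Q, E', j, q, hjq, hQ, hE'⟩
  have sq : IsPushout f j (pushout.inl f j) (pushout.inr f j) := .of_hasPushout f j
  obtain ⟨g', hg'⟩ := hfg.exists_isSES_of_isPushout sq
  obtain ⟨q', hq'⟩ := hjq.exists_isSES_of_isPushout sq.flip
  exact ⟨Q, pushout f j, _, g', hg', hX _ q' hq' hE hE', hQ⟩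

lemma inCone_inCocone_le_inCocone_inCone :
    InCone Y (InCocone W X) ≤ InCocone (InCone Y W) X := by
  rintro K ⟨Y₀, A, y, p, hyp, ⟨W₀, E, i, q, hiq, hW₀, hE⟩, hY₀⟩
  have hi : Mono i := (isSES_iff_mono_and_isPushout.1 hiq).1
  -- The pushout is `W₀ / Y₀`, which contains `K = A / Y₀` with cokernel `E = W₀ / A`.
  have sq : IsPushout i p (pushout.inl i p) (pushout.inr i p) := .of_hasPushout i p
  obtain ⟨q', hq'⟩ := hiq.exists_isSES_of_isPushout sq
  exact ⟨pushout i p, E, _, q', hq', ⟨Y₀, W₀, _, _, hyp.comp_of_isPushout sq, hW₀, hY₀⟩, hE⟩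

end ConesAndCocones

section Resolutions

variable {𝓐 : Type u} [Category.{v} 𝓐] [Abelian 𝓐] {W X : 𝓐 → Prop}

lemma Hat.mono (h : W ≤ X) (n : ℕ) : Hat W n ≤ Hat X n := by
  induction n with
  | zero => exact h
  | succ n ih => exact InCone.mono ih h

lemma hat_succ_le_inCone_of_le_inCocone (hX : ExtClosed X) {Y : 𝓐 → Prop} {n : ℕ}
    (h : Hat X n ≤ InCocone Y X) : Hat X (n + 1) ≤ InCone Y X :=
  (InCone.mono h le_rfl).trans (inCone_inCocone_le_inCone hX)

lemma hat_le_inCocone_hat (hX : ExtClosed X) (hW : X ≤ InCocone W X) (n : ℕ) :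
    Hat X n ≤ InCocone (Hat W n) X := by
  induction n with
  | zero => exact hW
  | succ n ih =>
    calc Hat X (n + 1)
      _ ≤ InCone (Hat W n) X := hat_succ_le_inCone_of_le_inCocone hX ih
      _ ≤ InCone (Hat W n) (InCocone W X) := InCone.mono le_rfl hW
      _ ≤ InCocone (Hat W (n + 1)) X := inCone_inCocone_le_inCocone_inCone

theorem statement0_general (hX : ExtClosed X) (hW : IsCogenerator W X) (n : ℕ) (M : 𝓐) :
    Hat X (n + 1) M ↔ InCone (Hat W n) X M :=
  ⟨hat_succ_le_inCone_of_le_inCocone hX (hat_le_inCocone_hat hX hW.2 n) M,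
    InCone.mono (Hat.mono hW.1 n) le_rfl M⟩

end Resolutions

/-- If `X` is closed under extensions and `W` is a cogenerator for `X`,
then for `n ≥ 1`, `C ∈ X̂ₙ` iff there is a short exact sequence `0 → Y_C → X_C → C → 0`
with `X_C ∈ X` and `Y_C ∈ Ŵₙ₋₁`. -/
theorem statement0 {C : Type u} [Category.{v} C] [Abelian C]
    [EnoughProjectives C] [EnoughInjectives C]
    (X W : C → Prop) (hX : IsSubcat X) (hW : IsSubcat W)
    (hXext : ExtClosed X) (hcog : IsCogenerator W X)
    (M : C) (n : ℕ) (hn : 1 ≤ n) :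
    Hat X n M ↔
      ∃ (Y E : C) (f : Y ⟶ E) (g : E ⟶ M), IsSES f g ∧ X E ∧ Hat W (n - 1) Y := by
  obtain ⟨m, rfl⟩ := Nat.exists_eq_add_of_le' hn
  exact statement0_general hXext hcog m M

end FrobeniusPaper
end

section
/- Let X and W be subcategories of A such that X is closed under extensions and W is a cogenerator for X. If C ∈ X̂_n (n ≥ 0), then there exists a short exact sequence 0 → C → Y^C → X^C → 0 in A with X^C ∈ X and Y^C ∈ Ŵ_n. Conversely, if in addition X is closed under kernels of epimorphisms (i.e., whenever 0 → A' → B → C' → 0 is exact with B, C' ∈ X, then A' ∈ X), then the existence of such a short exact sequence 0 → C → Y^C → X^C → 0 with X^C ∈ X and Y^C ∈ Ŵ_n implies C ∈ X̂_n. -/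
/-!
Forward direction, by induction on `n`; the case `n = 0` is the cogenerator property. Given
`0 → K → E → M → 0` with `E ∈ X` and `K ∈ X̂ₙ`, embed `K` into some `Y ∈ Ŵₙ` with cokernel
`X' ∈ X`, and let `P` be the pushout of `E ← K → Y`. It sits in `0 → E → P → X' → 0` and
`0 → Y → P → M → 0`, so `P ∈ X` by closure under extensions, and `P` embeds into some `W₀ ∈ W`
with cokernel `X'' ∈ X`. Then `W₀ / Y` lies in `Ŵₙ₊₁`, and by the third isomorphism theorem it
contains `P / Y ≅ M` with quotient `X''`.

Conversely, let `0 → M → Y → E → 0` with `E ∈ X`. If `Y ∈ W`, then `M` is the kernel of an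
epimorphism in `X`. If `0 → K → W₀ → Y → 0` with `W₀ ∈ W` and `K ∈ Ŵₙ`, then the kernel `P` of
`W₀ → Y → E` lies in `X`, and `0 → K → P → M → 0` is exact by the dual of the third isomorphism
theorem; since `W ⊆ X`, this gives `M ∈ X̂ₙ₊₁`.
-/

open CategoryTheory CategoryTheory.Limits CategoryTheory.Abelian ZeroObject

universe w v u

namespace FrobeniusPaper

variable {C : Type u} [Category.{v} C] [Abelian C]

variable [HasExt.{w} C]

section

variable {𝓐 : Type u} [Category.{v} 𝓐] [Abelian 𝓐]

variable {A B D : 𝓐} {f : A ⟶ B} {g : B ⟶ D}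

-- Reduces pushouts and quotients of short exact sequences to the pasting of squares.
lemma isSES_iff_mono_and_isPushout_zero :
    IsSES f g ↔ Mono f ∧ IsPushout f (0 : A ⟶ 0) g (0 : 0 ⟶ D) := by
  constructor
  · rintro ⟨w, hs⟩
    have : Epi g := hs.epi_g
    have : Mono f := hs.mono_f
    refine ⟨‹_›, .mk' (by rw [w, zero_comp]) (fun _ _ _ h _ ↦ (cancel_epi g).mp h)
      fun _ k _ hkl ↦ ?_⟩
    have hk : f ≫ k = 0 := by rw [hkl, zero_comp]
    exact ⟨hs.exact.desc k hk, hs.exact.g_desc k hk, (isZero_zero 𝓐).eq_of_src _ _⟩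
  · rintro ⟨_, sq⟩
    have : Epi (0 : A ⟶ 0) := (isZero_zero 𝓐).epi _
    have : Epi g := sq.epi_inl_of_epi
    have w : f ≫ g = 0 := by rw [sq.w, zero_comp]
    have hg : IsColimit (CokernelCofork.ofπ g w) :=
      CokernelCofork.IsColimit.ofπ' g w fun k hk ↦
        ⟨sq.desc k 0 (by rw [hk, comp_zero]), sq.inl_desc _ _ _⟩
    exact ⟨w, .mk' (ShortComplex.exact_of_g_is_cokernel _ hg) ‹_› ‹_›⟩

namespace IsSES

lemma op (h : IsSES f g) : IsSES g.op f.op :=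
  ⟨by rw [← op_comp, h.1, op_zero], h.2.op⟩

lemma unop {A B D : 𝓐ᵒᵖ} {f : A ⟶ B} {g : B ⟶ D} (h : IsSES f g) : IsSES g.unop f.unop :=
  ⟨by rw [← unop_comp, h.1, unop_zero], h.2.unop⟩

lemma exists_of_isPushout (h : IsSES f g) {A' P : 𝓐} {a : A ⟶ A'} {b : B ⟶ P} {f' : A' ⟶ P}
    (sq : IsPushout f a b f') : ∃ g' : P ⟶ D, IsSES f' g' := by
  obtain ⟨hf, hg⟩ := isSES_iff_mono_and_isPushout_zero.mp h
  have hf' : Mono f' := (MorphismProperty.monomorphisms 𝓐).of_isPushout sq.flip hf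
  have outer : IsPushout f (a ≫ (0 : A' ⟶ 0)) g 0 := by rwa [comp_zero]
  exact ⟨_, isSES_iff_mono_and_isPushout_zero.mpr ⟨hf', outer.of_top' sq⟩⟩

lemma third_isomorphism {Q E : 𝓐} {p : B ⟶ Q} (hp : IsSES f p)
    {i : B ⟶ E} {q : E ⟶ D} (hi : IsSES i q) :
    ∃ (R : 𝓐) (s : E ⟶ R) (j : Q ⟶ R) (r : R ⟶ D), IsSES (f ≫ i) s ∧ IsSES j r := by
  obtain ⟨_, left⟩ := isSES_iff_mono_and_isPushout_zero.mp hp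
  have := hi.2.mono_f
  have right : IsPushout i p (pushout.inl i p) (pushout.inr i p) := .of_hasPushout i p
  obtain ⟨r, hr⟩ := hi.exists_of_isPushout right
  have outer := left.paste_horiz right
  rw [zero_comp] at outer
  exact ⟨_, _, _, r, isSES_iff_mono_and_isPushout_zero.mpr ⟨mono_comp f i, outer⟩, hr⟩

lemma third_isomorphism_dual {K E Y M : 𝓐} {i : K ⟶ E} {p : E ⟶ Y} (hp : IsSES i p)
    {f : M ⟶ Y} {g : Y ⟶ D} (hg : IsSES f g) :
    ∃ (P : 𝓐) (s : P ⟶ E) (j : K ⟶ P) (r : P ⟶ M), IsSES s (p ≫ g) ∧ IsSES j r := by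
  obtain ⟨R, s, r, j, hs, hr⟩ := hg.op.third_isomorphism hp.op
  exact ⟨R.unop, s.unop, j.unop, r.unop, hs.unop, hr.unop⟩

end IsSES

namespace Hat

variable {X W : 𝓐 → Prop}

lemma mono_s1 (hWX : ∀ M, W M → X M) {n : ℕ} {M : 𝓐} (hM : Hat W n M) : Hat X n M := by
  induction n generalizing M with
  | zero => exact hWX M hM
  | succ n ih =>
    obtain ⟨K, E, f, g, hs, hE, hK⟩ := hM
    exact ⟨K, E, f, g, hs, hWX E hE, ih hK⟩

lemma exists_isSES (hext : ExtClosed X) (hcog : IsCogenerator W X) {n : ℕ} {M : 𝓐}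
    (hM : Hat X n M) :
    ∃ (Y E : 𝓐) (f : M ⟶ Y) (g : Y ⟶ E), IsSES f g ∧ X E ∧ Hat W n Y := by
  induction n generalizing M with
  | zero =>
    obtain ⟨W₀, X', f, g, hs, hW₀, hX'⟩ := hcog.2 M hM
    exact ⟨W₀, X', f, g, hs, hX', hW₀⟩
  | succ n ih =>
    obtain ⟨K, E, f, g, hKEM, hE, hK⟩ := hM
    obtain ⟨Y, X', a, b, hKYX', hX', hY⟩ := ih hK
    have sq : IsPushout f a (pushout.inl f a) (pushout.inr f a) := .of_hasPushout f a
    obtain ⟨r, hYPM⟩ := hKEM.exists_of_isPushout sq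
    obtain ⟨r', hEPX'⟩ := hKYX'.exists_of_isPushout sq.flip
    have hP : X (pushout f a) := hext _ _ hEPX' hE hX'
    obtain ⟨W₀, X'', i, p, hPWX'', hW₀, hX''⟩ := hcog.2 _ hP
    obtain ⟨Q, q, j, t, hYWQ, hMQX''⟩ := hYPM.third_isomorphism hPWX''
    exact ⟨Q, X'', j, t, hMQX'', hX'', Y, W₀, _, q, hYWQ, hW₀, hY⟩

lemma of_isSES (hker : KerEpiClosed X) (hWX : ∀ M, W M → X M) {n : ℕ} {M Y E : 𝓐}
    {f : M ⟶ Y} {g : Y ⟶ E} (hs : IsSES f g) (hE : X E) (hY : Hat W n Y) : Hat X n M := by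
  cases n with
  | zero => exact hker f g hs (hWX Y hY) hE
  | succ n =>
    obtain ⟨K, W₀, i, p, hKWY, hW₀, hK⟩ := hY
    obtain ⟨P, q, j, r, hPWE, hKPM⟩ := hKWY.third_isomorphism_dual hs
    have hP : X P := hker q _ hPWE (hWX W₀ hW₀) hE
    exact ⟨K, P, j, r, hKPM, hP, hK.mono_s1 hWX⟩

end Hat

theorem statement1_general (X W : 𝓐 → Prop) (hXext : ExtClosed X) (hcog : IsCogenerator W X)
    (M : 𝓐) (n : ℕ) :
    (Hat X n M →
      ∃ (Y E : 𝓐) (f : M ⟶ Y) (g : Y ⟶ E), IsSES f g ∧ X E ∧ Hat W n Y) ∧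
    (KerEpiClosed X →
      (∃ (Y E : 𝓐) (f : M ⟶ Y) (g : Y ⟶ E), IsSES f g ∧ X E ∧ Hat W n Y) →
      Hat X n M) :=
  ⟨fun hM ↦ hM.exists_isSES hXext hcog,
    fun hker ⟨_, _, _, _, hs, hE, hY⟩ ↦ .of_isSES hker hcog.1 hs hE hY⟩

end

/-- If `X` is closed under extensions and `W` is a cogenerator for `X`, then
`C ∈ X̂ₙ` implies the existence of a short exact sequence `0 → C → Y^C → X^C → 0` with
`X^C ∈ X`, `Y^C ∈ Ŵₙ`; conversely, if in addition `X` is closed under kernels of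
epimorphisms, the existence of such a sequence implies `C ∈ X̂ₙ`. -/
theorem statement1 {C : Type u} [Category.{v} C] [Abelian C]
    [EnoughProjectives C] [EnoughInjectives C]
    (X W : C → Prop) (hX : IsSubcat X) (hW : IsSubcat W)
    (hXext : ExtClosed X) (hcog : IsCogenerator W X)
    (M : C) (n : ℕ) :
    (Hat X n M →
      ∃ (Y E : C) (f : M ⟶ Y) (g : Y ⟶ E), IsSES f g ∧ X E ∧ Hat W n Y) ∧
    (KerEpiClosed X →
      (∃ (Y E : C) (f : M ⟶ Y) (g : Y ⟶ E), IsSES f g ∧ X E ∧ Hat W n Y) →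
      Hat X n M) :=
  statement1_general X W hXext hcog M n

end FrobeniusPaper
end

section
/- Let (X, W) be a left Frobenius pair in A, let C ∈ X̂ and let n ≥ 0. The following are equivalent: (1) resdim_X(C) ≤ n, i.e., C ∈ X̂_n; (2) for every exact sequence 0 → U → X_{n−1} → ⋯ → X_1 → X_0 → C → 0 in A with all X_i ∈ X, one has U ∈ X. -/
open CategoryTheory CategoryTheory.Limits CategoryTheory.Abelian ZeroObject

universe w v u

namespace FrobeniusPaper

variable {C : Type u} [Category.{v} C] [Abelian C]

variable [HasExt.{w} C]

/-- `NthSyzygy X n U M` means there is an exact sequence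
`0 → U → Xₙ₋₁ → ⋯ → X₁ → X₀ → M → 0` with all `Xᵢ ∈ X` (for `n = 0`, `U ≅ M`). -/
def NthSyzygy (X : C → Prop) : ℕ → C → C → Prop
  | 0, U, M => Nonempty (U ≅ M)
  | (n + 1), U, M => ∃ (K E : C) (f : K ⟶ E) (g : E ⟶ M), IsSES f g ∧ X E ∧ NthSyzygy X n U K

end FrobeniusPaper

/-!
Given a resolution of `M` of length `m`, either `m ≤ n` and it is padded by zeros, or its `n`-th
syzygy lies in `X` by assumption and truncation gives a resolution of length `n`.

Conversely, let `0 → K → E → M → 0` be exact with `E ∈ X` and `M ∈ X̂ₙ₊₁`; by induction it suffices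
that `K ∈ X̂ₙ`. An Auslander–Buchweitz approximation `0 → Q → Y → M → 0` has `Y ∈ X` and `Q ∈ Ŵₙ`.
Since `Q ∈ X^⊥`, the map `E → M` lifts to `E → Y`, and Schanuel's argument makes `K` the kernel of
an epimorphism from `E ⊞ Q ∈ X̂ₙ` onto `Y ∈ X`.
-/

namespace FrobeniusPaper

variable {C : Type u} [Category.{v} C] [Abelian C]

section ShortExact

variable {A B D N P : C} {f : A ⟶ B} {g : B ⟶ D}

lemma isSES_iff_isPullback : IsSES f g ↔ IsPullback f (0 : A ⟶ 0) g 0 ∧ Epi g := by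
  refine ⟨fun ⟨w, h⟩ => ?_, fun ⟨sq, _⟩ => ?_⟩
  · have := h.mono_f
    exact ⟨.mk' (by simp [w]) (fun _ _ _ hφ _ => (cancel_mono f).1 hφ) fun _ a b hab =>
      ⟨h.exact.lift a (by simp [hab]), h.exact.lift_f _ _, (isZero_zero C).eq_of_tgt _ _⟩, h.epi_g⟩
  · have w : f ≫ g = 0 := by simp [sq.w]
    have : Mono f := sq.mono_fst_of_mono
    exact ⟨w, ⟨ShortComplex.exact_of_f_is_kernel _ (KernelFork.IsLimit.ofι' _ w fun x hx =>
      ⟨sq.lift x 0 (by simp [hx]), sq.lift_fst _ _ _⟩)⟩⟩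

lemma isSES_iff_isPushout : IsSES f g ↔ IsPushout f (0 : A ⟶ 0) g 0 ∧ Mono f := by
  refine ⟨fun ⟨w, h⟩ => ?_, fun ⟨sq, _⟩ => ?_⟩
  · have := h.epi_g
    exact ⟨.mk' (by simp [w]) (fun _ _ _ hφ _ => (cancel_epi g).1 hφ) fun _ a b hab =>
      ⟨h.exact.desc a (by simp [hab]), h.exact.g_desc _ _, (isZero_zero C).eq_of_src _ _⟩, h.mono_f⟩
  · have w : f ≫ g = 0 := by simp [sq.w]
    have : Epi g := sq.epi_inl_of_epi
    exact ⟨w, ⟨ShortComplex.exact_of_g_is_cokernel _ (CokernelCofork.IsColimit.ofπ' _ w fun x hx =>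
      ⟨sq.desc x 0 (by simp [hx]), sq.inl_desc _ _ _⟩)⟩⟩

lemma isSES_zero_id (A : C) : IsSES (0 : 0 ⟶ A) (𝟙 A) :=
  isSES_iff_isPullback.2 ⟨.zero_left A, inferInstance⟩

lemma isSES_hom_zero (e : A ≅ B) : IsSES e.hom (0 : B ⟶ 0) :=
  isSES_iff_isPullback.2 ⟨.of_horiz_isIso_mono ⟨by simp⟩, inferInstance⟩

lemma isSES_inl_snd (A B : C) : IsSES (biprod.inl : A ⟶ A ⊞ B) biprod.snd :=
  ⟨biprod.inl_snd, (ShortComplex.Splitting.ofHasBinaryBiproduct A B).shortExact⟩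

namespace IsSES

lemma zero (h : IsSES f g) : f ≫ g = 0 := h.1

lemma mono (h : IsSES f g) : Mono f := h.2.mono_f

lemma epi (h : IsSES f g) : Epi g := h.2.epi_g

lemma isPullback (h : IsSES f g) : IsPullback f (0 : A ⟶ 0) g 0 := (isSES_iff_isPullback.1 h).1

lemma isPushout (h : IsSES f g) : IsPushout f (0 : A ⟶ 0) g 0 := (isSES_iff_isPushout.1 h).1

lemma biprod_map {A' B' D' : C} {f' : A' ⟶ B'} {g' : B' ⟶ D'} (h : IsSES f g) (h' : IsSES f' g') :
    IsSES (biprod.map f f') (biprod.map g g') := by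
  have := h.mono
  have := h'.mono
  have := h.epi
  have := h'.epi
  refine isSES_iff_isPullback.2 ⟨.mk' ?_ ?_ ?_, inferInstance⟩
  · ext <;> simp [h.zero, h'.zero]
  · exact fun T φ φ' hφ _ => (cancel_mono (biprod.map f f')).1 hφ
  · intro T a b hab
    have ha : (a ≫ biprod.fst) ≫ g = 0 := by simpa using hab =≫ biprod.fst
    have ha' : (a ≫ biprod.snd) ≫ g' = 0 := by simpa using hab =≫ biprod.snd
    exact ⟨biprod.lift (h.2.exact.lift _ ha) (h'.2.exact.lift _ ha'),
      by ext <;> simp [h.2.exact.lift_f _ ha, h'.2.exact.lift_f _ ha'],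
      (isZero_zero C).eq_of_tgt _ _⟩

lemma of_isPullback (h : IsSES f g) {i : N ⟶ D} {fst : P ⟶ B} {snd : P ⟶ N}
    (sq : IsPullback fst snd g i) : IsSES (sq.lift f 0 (by simp [h.zero])) snd := by
  have : Epi snd := MorphismProperty.of_isPullback (P := .epimorphisms C) sq h.epi
  refine isSES_iff_isPullback.2 ⟨?_, this⟩
  simpa using IsPullback.of_right' (h₂₁ := 0) (by simpa using h.isPullback) sq

lemma comp_of_isPullback (h : IsSES f g) {p : N ⟶ B} [Epi p] {fst : P ⟶ N} {snd : P ⟶ A}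
    (sq : IsPullback fst snd p f) : IsSES fst (p ≫ g) := by
  have := h.epi
  exact isSES_iff_isPullback.2 ⟨by simpa using sq.paste_vert h.isPullback, inferInstance⟩

lemma of_isPushout (h : IsSES f g) {i : A ⟶ N} {inl : B ⟶ P} {inr : N ⟶ P}
    (sq : IsPushout f i inl inr) : IsSES inr (sq.desc g 0 (by simp [h.zero])) := by
  have : Mono inr := MorphismProperty.of_isPushout (P := .monomorphisms C) sq.flip h.mono
  refine isSES_iff_isPushout.2 ⟨?_, this⟩
  simpa using IsPushout.of_top' (h₃₁ := 0) (by simpa using h.isPushout) sq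

lemma comp_of_isPushout_s4 (h : IsSES f g) {j : B ⟶ N} [Mono j] {inl : N ⟶ P} {inr : D ⟶ P}
    (sq : IsPushout j g inl inr) : IsSES (f ≫ j) inl := by
  have := h.mono
  exact isSES_iff_isPushout.2 ⟨by simpa using h.isPushout.paste_horiz sq, inferInstance⟩

/-- Half of Schanuel's lemma: only one of the two maps onto `M` is required to lift. -/
lemma schanuel {K E Q Y M : C} {f : K ⟶ E} {k : Q ⟶ Y} {p : Y ⟶ M} {φ : E ⟶ Y}
    (h : IsSES f (φ ≫ p)) (h' : IsSES k p) :
    ∃ (a : K ⟶ E ⊞ Q) (b : E ⊞ Q ⟶ Y), IsSES a b := by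
  have sq := IsPullback.of_bot' (v₁₂ := φ) (by simpa using h.isPullback) h'.isPullback
  have hepi : Epi (biprod.desc φ (-k)) := Preadditive.epi_of_cancel_zero _ fun x hx => by
    have hφ : φ ≫ x = 0 := by simpa using biprod.inl ≫= hx
    have hk : k ≫ x = 0 := by simpa using biprod.inr ≫= hx
    have := h.epi
    have := h'.epi
    obtain ⟨y, rfl⟩ : ∃ y, p ≫ y = x := ⟨_, h'.2.exact.g_desc x hk⟩
    have hy : y = 0 := zero_of_epi_comp (φ ≫ p) (by simpa using hφ)
    rw [hy, comp_zero]
  exact ⟨_, _, sq.shortComplex'.zero, .mk' sq.exact_shortComplex' sq.mono_shortComplex'_f hepi⟩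

end IsSES

end ShortExact

section Resolution

variable {X W : C → Prop}

lemma KerEpiClosed.zero_mem (hX : KerEpiClosed X) {M : C} (hM : X M) : X 0 :=
  hX _ _ (isSES_zero_id M) hM hM

lemma KerEpiClosed.mem_of_iso (hX : KerEpiClosed X) {A B : C} (e : A ≅ B) (hB : X B) : X A :=
  hX _ _ (isSES_hom_zero e) hB (hX.zero_mem hB)

lemma ExtClosed.biprod_mem (hX : ExtClosed X) {A B : C} (hA : X A) (hB : X B) : X (A ⊞ B) :=
  hX _ _ (isSES_inl_snd A B) hA hB

lemma Hat.imp (hWX : ∀ M, W M → X M) : ∀ {n : ℕ} {M : C}, Hat W n M → Hat X n M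
  | 0, _, hM => hWX _ hM
  | _ + 1, _, ⟨K, E, f, g, h, hE, hK⟩ => ⟨K, E, f, g, h, hWX _ hE, hK.imp hWX⟩

lemma Hat.succ (hX : X 0) : ∀ {n : ℕ} {M : C}, Hat X n M → Hat X (n + 1) M
  | 0, M, hM => ⟨0, M, 0, 𝟙 M, isSES_zero_id M, hM, hX⟩
  | _ + 1, _, ⟨K, E, f, g, h, hE, hK⟩ => ⟨K, E, f, g, h, hE, hK.succ hX⟩

lemma monotone_hat (hX : X 0) : Monotone (Hat X) :=
  monotone_nat_of_le_succ fun _ _ hM => hM.succ hX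

lemma HatAll.zero_mem (hX : KerEpiClosed X) {M : C} : HatAll X M → X 0
  | ⟨0, hM⟩ => hX.zero_mem hM
  | ⟨_ + 1, _, _, _, _, _, hE, _⟩ => hX.zero_mem hE

lemma Hat.biprod (hX : ∀ {A B : C}, X A → X B → X (A ⊞ B)) :
    ∀ {n : ℕ} {M N : C}, Hat X n M → Hat X n N → Hat X n (M ⊞ N)
  | 0, _, _, hM, hN => hX hM hN
  | _ + 1, _, _, ⟨_, _, _, _, h, hE, hK⟩, ⟨_, _, _, _, h', hE', hK'⟩ =>
    ⟨_, _, _, _, h.biprod_map h', hX hE hE', hK.biprod hX hK'⟩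

lemma Hat.of_isSES_of_mem (hX : KerEpiClosed X) : ∀ {n : ℕ} {K P Y : C} {f : K ⟶ P} {g : P ⟶ Y},
    IsSES f g → Hat X n P → X Y → Hat X n K
  | 0, _, _, _, f, g, h, hP, hY => hX f g h hP hY
  | _ + 1, _, _, _, f, _, h, ⟨L, _, _, p, h', hE, hL⟩, hY =>
    have := h'.epi
    have sq := IsPullback.of_hasPullback p f
    ⟨L, _, _, _, h'.of_isPullback sq, hX _ _ (h.comp_of_isPullback sq) hE hY, hL⟩

lemma NthSyzygy.hat (hX : KerEpiClosed X) :
    ∀ {n : ℕ} {U M : C}, NthSyzygy X n U M → X U → Hat X n M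
  | 0, _, _, ⟨e⟩, hU => hX.mem_of_iso e.symm hU
  | _ + 1, _, _, ⟨K, E, f, g, h, hE, hK⟩, hU => ⟨K, E, f, g, h, hE, hK.hat hX hU⟩

lemma Hat.exists_nthSyzygy : ∀ {n m : ℕ} {M : C}, n ≤ m → Hat X m M → ∃ U, NthSyzygy X n U M
  | 0, _, M, _, _ => ⟨M, ⟨Iso.refl M⟩⟩
  | _ + 1, _ + 1, _, hnm, ⟨K, E, f, g, h, hE, hK⟩ =>
    let ⟨U, hU⟩ := hK.exists_nthSyzygy (Nat.le_of_succ_le_succ hnm)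
    ⟨U, K, E, f, g, h, hE, hU⟩

lemma Hat.exists_coapproximation (hX : ExtClosed X) (hW : IsCogenerator W X) :
    ∀ {n : ℕ} {M : C}, Hat X n M →
      ∃ (Q X' : C) (f : M ⟶ Q) (g : Q ⟶ X'), IsSES f g ∧ Hat W n Q ∧ X X'
  | 0, M, hM => hW.2 M hM
  | n + 1, M, ⟨L, Y, f, g, h, hY, hL⟩ => by
    obtain ⟨Q, X', i, p, hQX', hQ, hX'⟩ := hL.exists_coapproximation hX hW
    have sq := IsPushout.of_hasPushout f i
    have hP : X (pushout f i) := hX _ _ (hQX'.of_isPushout sq.flip) hY hX'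
    obtain ⟨W₀, X'', j, q, hWX'', hW₀, hX''⟩ := hW.2 _ hP
    have := hWX''.mono
    have hQPM := h.of_isPushout sq
    have sq' := IsPushout.of_hasPushout j (sq.desc g 0 (by simp [h.zero]))
    exact ⟨_, X'', _, _, hWX''.of_isPushout sq',
      ⟨Q, W₀, _, _, hQPM.comp_of_isPushout_s4 sq', hW₀, hQ⟩, hX''⟩

lemma Hat.exists_approximation (hX : ExtClosed X) (hW : IsCogenerator W X) {n : ℕ} {M : C} :
    Hat X (n + 1) M → ∃ (Q Y : C) (f : Q ⟶ Y) (g : Y ⟶ M), IsSES f g ∧ Hat W n Q ∧ X Y := by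
  rintro ⟨L, Y, f, g, h, hY, hL⟩
  obtain ⟨Q, X', i, p, hQX', hQ, hX'⟩ := hL.exists_coapproximation hX hW
  have sq := IsPushout.of_hasPushout f i
  exact ⟨Q, _, _, _, h.of_isPushout sq, hQ, hX _ _ (hQX'.of_isPushout sq.flip) hY hX'⟩

end Resolution

section Ext

variable [HasExt.{w} C] {X W : C → Prop}

lemma IsSES.exists_lift_of_subsingleton_ext {A B D E : C} {f : A ⟶ B} {g : B ⟶ D} (h : IsSES f g)
    (hext : Subsingleton (Ext E A 1)) (x : E ⟶ D) : ∃ y : E ⟶ B, y ≫ g = x := by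
  obtain ⟨y, hy⟩ := Ext.covariant_sequence_exact₃ E h.2 (Ext.mk₀ x) (zero_add 1)
    (Subsingleton.elim _ _)
  obtain ⟨y, rfl⟩ := (Ext.mk₀_bijective _ _).2 y
  exact ⟨y, (Ext.mk₀_bijective _ _).1 (by simpa using hy)⟩

lemma rightPerp.of_isSES {A B D : C} {f : A ⟶ B} {g : B ⟶ D} (h : IsSES f g)
    (hA : rightPerp X A) (hB : rightPerp X B) : rightPerp X D := fun M hM i hi => by
  have hBi := hB M hM i hi
  have hAi := hA M hM (i + 1) (by omega)
  refine subsingleton_of_forall_eq 0 fun x => ?_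
  obtain ⟨y, rfl⟩ := Ext.covariant_sequence_exact₃ M h.2 x rfl (Subsingleton.elim _ _)
  rw [Subsingleton.elim y 0, Ext.zero_comp]

lemma Hat.rightPerp (hW : ∀ M, W M → rightPerp X M) :
    ∀ {n : ℕ} {M : C}, Hat W n M → FrobeniusPaper.rightPerp X M
  | 0, M, hM => hW M hM
  | _ + 1, _, ⟨_, E, _, _, h, hE, hK⟩ => .of_isSES h (hK.rightPerp hW) (hW E hE)

lemma Hat.of_isSES_succ (hext : ExtClosed X) (hker : KerEpiClosed X) (hcogen : IsCogenerator W X)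
    (hperp : ∀ M, W M → FrobeniusPaper.rightPerp X M) {n : ℕ} {K E M : C} {f : K ⟶ E} {g : E ⟶ M}
    (h : IsSES f g) (hE : X E) (hM : Hat X (n + 1) M) : Hat X n K := by
  obtain ⟨Q, Y, k, p, hQY, hQ, hY⟩ := hM.exists_approximation hext hcogen
  obtain ⟨φ, rfl⟩ := hQY.exists_lift_of_subsingleton_ext (hQ.rightPerp hperp E hE 1 le_rfl) g
  obtain ⟨a, b, hK⟩ := h.schanuel hQY
  have hE' : Hat X n E := monotone_hat (hker.zero_mem hE) (Nat.zero_le n) E hE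
  exact .of_isSES_of_mem hker hK (hE'.biprod hext.biprod_mem (hQ.imp hcogen.1)) hY

lemma NthSyzygy.mem_of_hat (hext : ExtClosed X) (hker : KerEpiClosed X)
    (hcogen : IsCogenerator W X) (hperp : ∀ M, W M → rightPerp X M) :
    ∀ {n : ℕ} {U M : C}, NthSyzygy X n U M → Hat X n M → X U
  | 0, _, _, ⟨e⟩, hM => hker.mem_of_iso e hM
  | _ + 1, _, _, ⟨_, _, _, _, h, hE, hU⟩, hM =>
    hU.mem_of_hat hext hker hcogen hperp (hM.of_isSES_succ hext hker hcogen hperp h hE)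

theorem statement4_general (hext : ExtClosed X) (hker : KerEpiClosed X)
    (hcogen : IsCogenerator W X) (hperp : ∀ M, W M → rightPerp X M) {M : C} (hM : HatAll X M)
    (n : ℕ) : Hat X n M ↔ ∀ U : C, NthSyzygy X n U M → X U := by
  refine ⟨fun h U hU => hU.mem_of_hat hext hker hcogen hperp h, fun h => ?_⟩
  have hX : X 0 := hM.zero_mem hker
  obtain ⟨m, hm⟩ := hM
  rcases le_total m n with hmn | hnm
  · exact monotone_hat hX hmn M hm
  · obtain ⟨U, hU⟩ := hm.exists_nthSyzygy hnm
    exact hU.hat hker (h U hU)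

end Ext

/-- For a left Frobenius pair `(X, W)`, `C ∈ X̂` and `n ≥ 0`:
`resdim_X(C) ≤ n` iff every `n`-th `X`-syzygy of `C` belongs to `X`. -/
theorem statement4 {C : Type u} [Category.{v} C] [Abelian C]
    [EnoughProjectives C] [EnoughInjectives C] [HasExt.{w} C]
    (X W : C → Prop) (hF : LeftFrobenius X W)
    (M : C) (hM : HatAll X M) (n : ℕ) :
    Hat X n M ↔ ∀ U : C, NthSyzygy X n U M → X U :=
  statement4_general hF.extClosed hF.kerEpiClosed hF.cogen hF.perp hM n

end FrobeniusPaper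
end

section
/- Let U and V be subcategories of A such that (U, V) is a cotorsion pair on the extension-closed subcategory Thick(U) of A and V ⊆ U^⊥. Then (U, U ∩ V) is a left Frobenius pair in A; in particular, U is closed under extensions and under kernels of epimorphisms, and U ∩ V is a cogenerator for U contained in U^⊥. -/
/-!
In a cotorsion pair `(U, V)` on `B`, each class is determined by the other: if `M ∈ B` satisfies
`Ext¹(M, V) = 0`, the approximation sequence `0 → V₀ → U₀ → M → 0` splits and `M` is a summand of
`U₀ ∈ U`; dually for `V`. Closure properties of `U` and `V` thus reduce to those of `B` and to long
exact `Ext`-sequences. For an exact sequence `0 → K → L → M → 0` with `L, M ∈ U`, the group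
`Ext¹(K, N)` sits between `Ext¹(L, N)` and `Ext²(M, N)`, and the latter vanishes for `N ∈ V` because
`V ⊆ U^⊥`. For `M ∈ U`, the middle term of the other approximation sequence `0 → M → V₀ → U₀ → 0`
is in `V` and, being an extension of objects of `U`, also in `U`.
-/

open CategoryTheory CategoryTheory.Limits CategoryTheory.Abelian ZeroObject

universe w v u

namespace FrobeniusPaper

variable {C : Type u} [Category.{v} C] [Abelian C]

variable [HasExt.{w} C]

section Subcategories

variable {𝒜 : Type u} [Category.{v} 𝒜] [Abelian 𝒜]

lemma isSES_biprod (A D : 𝒜) : IsSES (biprod.inl : A ⟶ A ⊞ D) (biprod.snd : A ⊞ D ⟶ D) :=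
  ⟨biprod.inl_snd, (ShortComplex.Splitting.ofHasBinaryBiproduct A D).shortExact⟩

lemma ExtClosed.biprod {X : 𝒜 → Prop} (h : ExtClosed X) {A D : 𝒜} (hA : X A) (hD : X D) :
    X (A ⊞ D) :=
  h _ _ (isSES_biprod A D) hA hD

lemma IsSubcat.inter {X Y : 𝒜 → Prop} (hX : IsSubcat X) (hY : IsSubcat Y) :
    IsSubcat (fun M => X M ∧ Y M) where
  zero := ⟨hX.zero, hY.zero⟩
  iso_closed e h := ⟨hX.iso_closed e h.1, hY.iso_closed e h.2⟩
  biprod_closed hA hB := ⟨hX.biprod_closed hA.1 hB.1, hY.biprod_closed hA.2 hB.2⟩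
  summand_closed i p hip h := ⟨hX.summand_closed i p hip h.1, hY.summand_closed i p hip h.2⟩

lemma IsThickSub.extClosed {T : 𝒜 → Prop} (hT : IsThickSub T) : ExtClosed T :=
  fun _ _ _ f g h => (hT.2 f g h).2.1

lemma IsThickSub.kerEpiClosed {T : 𝒜 → Prop} (hT : IsThickSub T) : KerEpiClosed T :=
  fun _ _ _ f g h => (hT.2 f g h).2.2

lemma isThickSub_thickClosure (X : 𝒜 → Prop) : IsThickSub (thickClosure X) where
  left :=
    { zero := fun _ hT _ => hT.1.zero
      iso_closed := fun e hA T hT hX => hT.1.iso_closed e (hA T hT hX)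
      biprod_closed := fun hA hB T hT hX => hT.1.biprod_closed (hA T hT hX) (hB T hT hX)
      summand_closed := fun i p hip hM T hT hX => hT.1.summand_closed i p hip (hM T hT hX) }
  right _ _ _ f g h :=
    ⟨fun hA hB T hT hX => (hT.2 f g h).1 (hA T hT hX) (hB T hT hX),
      fun hA hD T hT hX => (hT.2 f g h).2.1 (hA T hT hX) (hD T hT hX),
      fun hB hD T hT hX => (hT.2 f g h).2.2 (hB T hT hX) (hD T hT hX)⟩

end Subcategories

section Ext

variable {𝒜 : Type u} [Category.{v} 𝒜] [Abelian 𝒜] [HasExt.{w} 𝒜]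
  {A B D : 𝒜} {f : A ⟶ B} {g : B ⟶ D}

lemma IsSES.exists_lift (h : IsSES f g) {X : 𝒜} (hX : Subsingleton (Ext X A 1)) (φ : X ⟶ D) :
    ∃ ψ : X ⟶ B, ψ ≫ g = φ := by
  obtain ⟨_, hS⟩ := h
  obtain ⟨x, hx⟩ := Ext.covariant_sequence_exact₃ X hS (Ext.mk₀ φ) (zero_add 1) (hX.elim _ _)
  obtain ⟨ψ, rfl⟩ := (Ext.mk₀_bijective X B).2 x
  exact ⟨ψ, (Ext.mk₀_bijective X D).1 (by simpa using hx)⟩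

lemma IsSES.exists_desc (h : IsSES f g) {Y : 𝒜} (hY : Subsingleton (Ext D Y 1))
    (φ : A ⟶ Y) : ∃ ψ : B ⟶ Y, f ≫ ψ = φ := by
  obtain ⟨_, hS⟩ := h
  obtain ⟨x, hx⟩ := Ext.contravariant_sequence_exact₁ hS Y (Ext.mk₀ φ) (add_zero 1) (hY.elim _ _)
  obtain ⟨ψ, rfl⟩ := (Ext.mk₀_bijective B Y).2 x
  exact ⟨ψ, (Ext.mk₀_bijective A Y).1 (by simpa using hx)⟩

lemma IsSES.covariant_subsingleton_ext₂ (h : IsSES f g) {X : 𝒜} {n : ℕ}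
    (hA : Subsingleton (Ext X A n)) (hD : Subsingleton (Ext X D n)) :
    Subsingleton (Ext X B n) := by
  obtain ⟨_, hS⟩ := h
  refine subsingleton_of_forall_eq 0 fun x => ?_
  obtain ⟨y, rfl⟩ := Ext.covariant_sequence_exact₂ X hS x (hD.elim _ _)
  rw [hA.elim y 0, Ext.zero_comp]

lemma IsSES.contravariant_subsingleton_ext₂ (h : IsSES f g) {Y : 𝒜} {n : ℕ}
    (hA : Subsingleton (Ext A Y n)) (hD : Subsingleton (Ext D Y n)) :
    Subsingleton (Ext B Y n) := by
  obtain ⟨_, hS⟩ := h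
  refine subsingleton_of_forall_eq 0 fun x => ?_
  obtain ⟨y, rfl⟩ := Ext.contravariant_sequence_exact₂ hS Y x (hA.elim _ _)
  rw [hD.elim y 0, Ext.comp_zero]

lemma IsSES.contravariant_subsingleton_ext₁ (h : IsSES f g) {Y : 𝒜} {n : ℕ}
    (hB : Subsingleton (Ext B Y n)) (hD : Subsingleton (Ext D Y (n + 1))) :
    Subsingleton (Ext A Y n) := by
  obtain ⟨_, hS⟩ := h
  refine subsingleton_of_forall_eq 0 fun x => ?_
  obtain ⟨y, rfl⟩ := Ext.contravariant_sequence_exact₁ hS Y x (add_comm 1 n) (hD.elim _ _)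
  rw [hB.elim y 0, Ext.comp_zero]

end Ext

namespace CotorsionPairOn

variable {𝒜 : Type u} [Category.{v} 𝒜] [Abelian 𝒜] [HasExt.{w} 𝒜] {B U V : 𝒜 → Prop}

lemma mem_left_iff (h : CotorsionPairOn B U V) {M : 𝒜} :
    U M ↔ B M ∧ ∀ N, V N → Subsingleton (Ext M N 1) := by
  refine ⟨fun hM => ⟨h.subU M hM, fun N => h.ext1 M N hM⟩, fun ⟨hM, hExt⟩ => ?_⟩
  obtain ⟨V₀, U₀, f, g, hfg, hU₀, hV₀⟩ := h.res M hM
  obtain ⟨s, hs⟩ := hfg.exists_lift (hExt V₀ hV₀) (𝟙 M)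
  exact h.summandU s g hs hU₀

lemma mem_right_iff (h : CotorsionPairOn B U V) {N : 𝒜} :
    V N ↔ B N ∧ ∀ M, U M → Subsingleton (Ext M N 1) := by
  refine ⟨fun hN => ⟨h.subV N hN, fun M hM => h.ext1 M N hM hN⟩, fun ⟨hN, hExt⟩ => ?_⟩
  obtain ⟨V₀, U₀, f, g, hfg, hU₀, hV₀⟩ := h.cores N hN
  obtain ⟨r, hr⟩ := hfg.exists_desc (hExt U₀ hU₀) (𝟙 N)
  exact h.summandV f r hr hV₀

lemma extClosed_left (h : CotorsionPairOn B U V) (hB : ExtClosed B) : ExtClosed U :=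
  fun K _ M f g hfg hK hM => h.mem_left_iff.2 ⟨hB f g hfg (h.subU K hK) (h.subU M hM), fun N hN =>
    hfg.contravariant_subsingleton_ext₂ (h.ext1 K N hK hN) (h.ext1 M N hM hN)⟩

lemma extClosed_right (h : CotorsionPairOn B U V) (hB : ExtClosed B) : ExtClosed V :=
  fun K _ M f g hfg hK hM => h.mem_right_iff.2 ⟨hB f g hfg (h.subV K hK) (h.subV M hM), fun N hN =>
    hfg.covariant_subsingleton_ext₂ (h.ext1 N K hN hK) (h.ext1 N M hN hM)⟩

lemma kerEpiClosed_left (h : CotorsionPairOn B U V) (hB : KerEpiClosed B)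
    (hExt₂ : ∀ M N, U M → V N → Subsingleton (Ext M N 2)) : KerEpiClosed U :=
  fun _ L M f g hfg hL hM => h.mem_left_iff.2 ⟨hB f g hfg (h.subU L hL) (h.subU M hM), fun N hN =>
    hfg.contravariant_subsingleton_ext₁ (h.ext1 L N hL hN) (hExt₂ M N hM hN)⟩

lemma isSubcat_left (h : CotorsionPairOn B U V) (hzero : B 0) (hB : ExtClosed B) :
    IsSubcat U where
  zero := h.mem_left_iff.2 ⟨hzero, fun N _ => Ext.subsingleton_of_projective 0 N 0⟩
  iso_closed := h.isoU
  biprod_closed := (h.extClosed_left hB).biprod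
  summand_closed := h.summandU

lemma isSubcat_right (h : CotorsionPairOn B U V) (hzero : B 0) (hB : ExtClosed B) :
    IsSubcat V where
  zero := h.mem_right_iff.2 ⟨hzero, fun M _ => Ext.subsingleton_of_injective M 0 0⟩
  iso_closed := h.isoV
  biprod_closed := (h.extClosed_right hB).biprod
  summand_closed := h.summandV

lemma isCogenerator_inter (h : CotorsionPairOn B U V) (hB : ExtClosed B) :
    IsCogenerator (fun M => U M ∧ V M) U := by
  refine ⟨fun _ hM => hM.1, fun M hM => ?_⟩
  obtain ⟨V₀, U₀, f, g, hfg, hU₀, hV₀⟩ := h.cores M (h.subU M hM)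
  exact ⟨V₀, U₀, f, g, hfg, ⟨h.extClosed_left hB f g hfg hM hU₀, hV₀⟩, hU₀⟩

end CotorsionPairOn

theorem statement8_general {𝒜 : Type u} [Category.{v} 𝒜] [Abelian 𝒜] [HasExt.{w} 𝒜]
    {B U V : 𝒜 → Prop} (hzero : B 0) (hBext : ExtClosed B) (hBker : KerEpiClosed B)
    (hcp : CotorsionPairOn B U V) (hperp : ∀ N, V N → rightPerp U N) :
    LeftFrobenius U (fun M => U M ∧ V M) where
  subX := hcp.isSubcat_left hzero hBext
  subW := (hcp.isSubcat_left hzero hBext).inter (hcp.isSubcat_right hzero hBext)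
  extClosed := hcp.extClosed_left hBext
  kerEpiClosed := hcp.kerEpiClosed_left hBker fun M N hM hN => hperp N hN M hM 2 one_le_two
  cogen := hcp.isCogenerator_inter hBext
  perp M hM := hperp M hM.2

/-- If `(U, V)` is a cotorsion pair on `Thick(U)` with `V ⊆ U^⊥`, then
`(U, U ∩ V)` is a left Frobenius pair. -/
theorem statement8 {C : Type u} [Category.{v} C] [Abelian C]
    [EnoughProjectives C] [EnoughInjectives C] [HasExt.{w} C]
    (U V : C → Prop) (hcp : CotorsionPairOn (thickClosure U) U V)
    (hperp : ∀ N, V N → rightPerp U N) :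
    LeftFrobenius U (fun M => U M ∧ V M) := by
  have hT := isThickSub_thickClosure U
  exact statement8_general hT.1.zero hT.extClosed hT.kerEpiClosed hcp hperp

end FrobeniusPaper
end
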